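/- Let S be a finite index set, let b : S → ℝ, and let V ∈ ℝ[(x_G)_{G∈S}]. Then there exists a unique polynomial W in the ring ℝ[x_i, x_e, (x_G)_{G∈S}] (with two distinguished variables x_i, x_e) satisfying all of the following: (i) ∂_i ∂_e W = 0; (ii) (∂_i − ∂_e − Σ_{G∈S} b_G ∂_G) W = 0; (iii) W|_{x_i=0, x_e=0} = 0; (iv) (∂_i W)|_{x_i=0, x_e=0} = V; and (v) (∂_e W)|_{x_i=0, x_e=0} = V. Equivalently, W is the unique solution of the differential equations (i) and (ii) whose expansion in x_i and x_e has the form W = (x_i + x_e)·V plus terms of total degree at least 2 in x_i and x_e. -/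

import Mathlib

open MvPolynomial

/-- Substituting `0` for the two distinguished variables `x_i = X (Sum.inl 0)` and
`x_e = X (Sum.inl 1)` of `ℝ[x_i, x_e, (x_G)_{G∈S}]`. -/
noncomputable def sub00 (S : Type*) (P : MvPolynomial (Fin 2 ⊕ S) ℝ) :
    MvPolynomial (Fin 2 ⊕ S) ℝ :=
  aeval (Sum.elim (fun _ : Fin 2 => (0 : MvPolynomial (Fin 2 ⊕ S) ℝ))
    (fun G : S => X (Sum.inr G))) P

/-!
Write `D = Σ_G b_G ∂_G`. The polynomial `W = ∫_{-x_e}^{x_i} V(x + t b) dt` has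
`∂_i W = V(x + x_i b)` and `∂_e W = V(x - x_e b)`. Since `∂_t V(x + t b) = D V(x + t b)`, the
defect `∂_i W - ∂_e W - D W` is independent of `x_i` and `x_e`; it is zero at `x_i = x_e = 0`,
hence everywhere. Conversely, the solutions with zero data form a set stable under `∂_i` and `∂_e`
on which restriction to `x_i = x_e = 0` vanishes, so by Taylor's formula they are all zero.
-/

section KillCompl

variable {σ τ R : Type*} [CommSemiring R]

@[simp]
theorem killCompl_X_apply {f : σ → τ} (hf : f.Injective) (i : σ) :
    killCompl hf (X (f i) : MvPolynomial τ R) = X i := by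
  rw [← rename_X f i, killCompl_rename_app]

@[simp]
theorem killCompl_inr_X_inl (i : τ) :
    killCompl (Sum.inr_injective (α := τ) (β := σ)) (X (Sum.inl i) : MvPolynomial (τ ⊕ σ) R) =
      0 := by
  simp [killCompl]

end KillCompl

section Derivation

variable {σ τ R A : Type*} [CommSemiring R] [CommSemiring A] [Algebra R A]

theorem derivation_algHom_eq_mul (φ : MvPolynomial σ R →ₐ[R] A)
    (d : Derivation R (MvPolynomial σ R) (MvPolynomial σ R)) (d' : Derivation R A A) (c : A)
    (h : ∀ i, d' (φ (X i)) = c * φ (d (X i))) (p : MvPolynomial σ R) :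
    d' (φ p) = c * φ (d p) := by
  induction p using MvPolynomial.induction_on with
  | C a => simp [← algebraMap_eq]
  | add p q hp hq => simp only [map_add, hp, hq, mul_add]
  | mul_X p i hp =>
    simp only [Derivation.leibniz, smul_eq_mul, map_add, map_mul, hp, h]
    ring

/-- The directional derivative `∑ i, v i ∂_i` along a constant vector `v`; as a derivation it makes
sense for infinitely many variables. -/
noncomputable def dirDeriv (v : σ → R) : Derivation R (MvPolynomial σ R) (MvPolynomial σ R) :=
  mkDerivation R fun i => C (v i)

@[simp]
theorem dirDeriv_X (v : σ → R) (i : σ) : dirDeriv v (X i) = C (v i) :=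
  mkDerivation_X _ _ _

theorem dirDeriv_sumElim_zero_apply [Fintype σ] (v : σ → R) (p : MvPolynomial (τ ⊕ σ) R) :
    dirDeriv (Sum.elim 0 v) p = ∑ i, v i • pderiv (Sum.inr i) p := by
  classical
  have sum_apply (q : MvPolynomial (τ ⊕ σ) R) :
      (∑ i, v i • pderiv (Sum.inr i) :
        Derivation R (MvPolynomial (τ ⊕ σ) R) (MvPolynomial (τ ⊕ σ) R)) q =
        ∑ i, v i • pderiv (Sum.inr i) q := by
    have := congrFun (map_sum (Derivation.coeFnAddMonoidHom (R := R) (A := MvPolynomial (τ ⊕ σ) R)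
      (M := MvPolynomial (τ ⊕ σ) R)) (fun i => v i • pderiv (Sum.inr i)) Finset.univ) q
    rwa [Finset.sum_apply] at this
  rw [← sum_apply]
  refine DFunLike.congr_fun (derivation_ext fun j => ?_) p
  rcases j with j | j <;> simp [sum_apply, pderiv_X, Pi.single_apply, smul_eq_C_mul]

theorem killCompl_inr_dirDeriv (v : σ → R) (p : MvPolynomial (τ ⊕ σ) R) :
    killCompl Sum.inr_injective (dirDeriv (Sum.elim 0 v) p) =
      dirDeriv v (killCompl Sum.inr_injective p) := by
  simpa using (derivation_algHom_eq_mul (killCompl Sum.inr_injective)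
    (dirDeriv (Sum.elim (0 : τ → R) v)) (dirDeriv v) 1
    (by rintro (i | i) <;> simp) p).symm

end Derivation

section Commute

variable {σ R : Type*} [CommRing R]

theorem derivation_comm_of_X (d d' : Derivation R (MvPolynomial σ R) (MvPolynomial σ R))
    (h : ∀ i, d (d' (X i)) = d' (d (X i))) (p : MvPolynomial σ R) : d (d' p) = d' (d p) := by
  have hlie : ⁅d, d'⁆ = 0 := derivation_ext fun i => by
    rw [Derivation.commutator_apply, h, sub_self, Derivation.zero_apply]
  rw [← sub_eq_zero, ← Derivation.commutator_apply, hlie, Derivation.zero_apply]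

theorem pderiv_dirDeriv (i : σ) (v : σ → R) (p : MvPolynomial σ R) :
    pderiv i (dirDeriv v p) = dirDeriv v (pderiv i p) := by
  classical
  refine derivation_comm_of_X _ _ (fun j => ?_) p
  simp [pderiv_X, Pi.single_apply, apply_ite]

theorem pderiv_pderiv_comm (i j : σ) (p : MvPolynomial σ R) :
    pderiv i (pderiv j p) = pderiv j (pderiv i p) := by
  classical
  refine derivation_comm_of_X _ _ (fun k => ?_) p
  simp [pderiv_X, Pi.single_apply, apply_ite]

end Commute

section Uniqueness

variable {σ τ R : Type*} [CommSemiring R] [IsAddTorsionFree R]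

-- Every Taylor coefficient of `p` in the directions outside `range f` is, up to a factorial, the
-- restriction of an iterated derivative of `p`, which stays in `N`.
theorem eq_zero_of_mem_of_pderiv_stable {f : σ → τ} (hf : f.Injective)
    {N : Set (MvPolynomial τ R)} (hN : ∀ p ∈ N, killCompl hf p = 0)
    (hd : ∀ i ∉ Set.range f, ∀ p ∈ N, pderiv i p ∈ N) {p : MvPolynomial τ R} (hp : p ∈ N) :
    p = 0 := by
  ext m
  induction m using WellFoundedLT.induction generalizing p with
  | ind m ih =>
    by_cases hm : ↑m.support ⊆ Set.range f
    · rw [← Finsupp.mapDomain_comapDomain f hf m hm, ← coeff_killCompl hf, hN p hp]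
      simp
    · obtain ⟨i, him, hi⟩ := Set.not_subset.1 hm
      have hle : Finsupp.single i 1 ≤ m := by
        simpa [Nat.one_le_iff_ne_zero] using him
      obtain ⟨m, rfl⟩ := le_iff_exists_add'.1 hle
      have hcoeff := ih m (lt_add_of_pos_right m (by simp [pos_iff_ne_zero])) (hd i hi p hp)
      rw [coeff_pderiv, coeff_zero, ← Nat.cast_succ, mul_comm, ← nsmul_eq_mul] at hcoeff
      exact (nsmul_eq_zero_iff_right (m i).succ_ne_zero).1 hcoeff

theorem eq_zero_of_pderiv_inl_eq_zero {p : MvPolynomial (τ ⊕ σ) R}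
    (hd : ∀ i, pderiv (Sum.inl i) p = 0) (h0 : killCompl Sum.inr_injective p = 0) : p = 0 := by
  refine eq_zero_of_mem_of_pderiv_stable Sum.inr_injective (N := {p, 0}) (by simp [h0]) ?_
    (Set.mem_insert _ _)
  rintro (i | i) hi q (rfl | rfl) <;> simp_all

end Uniqueness

section Transport

variable {σ R : Type*} [CommRing R] [IsAddTorsionFree R]

theorem eq_zero_of_transport (b : σ → R) {U : MvPolynomial (Fin 2 ⊕ σ) R}
    (hmixed : pderiv (Sum.inl 0) (pderiv (Sum.inl 1) U) = 0)
    (htransport : pderiv (Sum.inl 0) U - pderiv (Sum.inl 1) U = dirDeriv (Sum.elim 0 b) U)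
    (hU : killCompl Sum.inr_injective U = 0)
    (hU₀ : killCompl Sum.inr_injective (pderiv (Sum.inl 0) U) = 0) : U = 0 := by
  refine eq_zero_of_mem_of_pderiv_stable Sum.inr_injective
    (N := {P | pderiv (Sum.inl 0) (pderiv (Sum.inl 1) P) = 0 ∧
      pderiv (Sum.inl 0) P - pderiv (Sum.inl 1) P = dirDeriv (Sum.elim 0 b) P ∧
      killCompl Sum.inr_injective P = 0 ∧
      killCompl Sum.inr_injective (pderiv (Sum.inl 0) P) = 0})
    (fun P hP => hP.2.2.1) ?_ ⟨hmixed, htransport, hU, hU₀⟩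
  rintro (i | i) hi P ⟨hmix, htrans, hP, hP₀⟩
  · have hmix' : pderiv (Sum.inl 1) (pderiv (Sum.inl 0) P) = 0 := by
      rw [pderiv_pderiv_comm, hmix]
    match i with
    | 0 =>
      have htrans₀ : pderiv (Sum.inl 0) (pderiv (Sum.inl 0) P) =
          dirDeriv (Sum.elim 0 b) (pderiv (Sum.inl 0) P) := by
        simpa [pderiv_dirDeriv, hmix] using congrArg (pderiv (Sum.inl 0)) htrans
      exact ⟨by rw [hmix', map_zero], by rw [hmix', sub_zero, htrans₀], hP₀,
        by rw [htrans₀, killCompl_inr_dirDeriv, hP₀, map_zero]⟩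
    | 1 =>
      have htrans₁ : -pderiv (Sum.inl 1) (pderiv (Sum.inl 1) P) =
          dirDeriv (Sum.elim 0 b) (pderiv (Sum.inl 1) P) := by
        simpa [pderiv_dirDeriv, hmix'] using congrArg (pderiv (Sum.inl 1)) htrans
      have hP₁ : killCompl Sum.inr_injective (pderiv (Sum.inl 1) P) = 0 := by
        simpa [killCompl_inr_dirDeriv, hP, hP₀] using
          congrArg (killCompl Sum.inr_injective) htrans
      exact ⟨by rw [pderiv_pderiv_comm, hmix, map_zero], by rw [hmix, zero_sub, htrans₁], hP₁,
        by rw [hmix, map_zero]⟩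
  · exact absurd (Set.mem_range_self i) hi

end Transport

section Antiderivative

variable {σ R : Type*} [CommRing R] [Algebra ℚ R]

/-- The antiderivative `∫₀^{x_i}` of a polynomial with respect to `x_i`, vanishing at `x_i = 0`. -/
noncomputable def antideriv (i : σ) : MvPolynomial σ R →ₗ[R] MvPolynomial σ R :=
  (basisMonomials σ R).constr R fun m =>
    monomial (m + Finsupp.single i 1) (algebraMap ℚ R (m i + 1)⁻¹)

theorem antideriv_monomial (i : σ) (m : σ →₀ ℕ) (a : R) :
    antideriv i (monomial m a) =
      monomial (m + Finsupp.single i 1) (a * algebraMap ℚ R (m i + 1)⁻¹) := by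
  have h := (basisMonomials σ R).constr_basis R
    (fun m => monomial (m + Finsupp.single i 1) (algebraMap ℚ R (m i + 1)⁻¹)) m
  rw [coe_basisMonomials] at h
  rw [← mul_one a, ← smul_eq_mul, ← smul_monomial, map_smul, antideriv, h, smul_monomial]
  simp

theorem pderiv_antideriv (i : σ) (p : MvPolynomial σ R) : pderiv i (antideriv i p) = p := by
  suffices h : (pderiv i).toLinearMap ∘ₗ antideriv i = LinearMap.id (R := R) from
    LinearMap.congr_fun h p
  refine (basisMonomials σ R).ext fun m => ?_
  have hm : (m i + 1 : ℚ) ≠ 0 := by positivity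
  have hinv : algebraMap ℚ R (m i + 1)⁻¹ * (m i + 1) = 1 := by
    simpa using congrArg (algebraMap ℚ R) (inv_mul_cancel₀ hm)
  simp [antideriv_monomial, pderiv_monomial, hinv]

theorem pderiv_antideriv_of_ne {i j : σ} (hij : i ≠ j) (p : MvPolynomial σ R) :
    pderiv j (antideriv i p) = antideriv i (pderiv j p) := by
  suffices h : (pderiv j).toLinearMap ∘ₗ antideriv i =
      antideriv i ∘ₗ (pderiv (R := R) j).toLinearMap from LinearMap.congr_fun h p
  refine (basisMonomials σ R).ext fun m => ?_
  rcases eq_or_ne (m j) 0 with hj | hj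
  · simp [antideriv_monomial, pderiv_monomial, hj, hij]
  · have hle : Finsupp.single j 1 ≤ m := by simpa [Nat.one_le_iff_ne_zero] using hj
    simp [antideriv_monomial, pderiv_monomial, hij, hij.symm, tsub_add_eq_add_tsub hle, mul_comm]

theorem X_dvd_antideriv (i : σ) (p : MvPolynomial σ R) : X i ∣ antideriv i p := by
  induction p using MvPolynomial.induction_on' with
  | monomial m a =>
    rw [antideriv_monomial, monomial_add_single, pow_one]
    exact dvd_mul_left _ _
  | add p q hp hq => simpa only [map_add] using dvd_add hp hq

theorem killCompl_inr_antideriv_inl {τ : Type*} (i : τ) (p : MvPolynomial (τ ⊕ σ) R) :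
    killCompl Sum.inr_injective (antideriv (Sum.inl i) p) = 0 := by
  obtain ⟨q, hq⟩ := X_dvd_antideriv (Sum.inl i) p
  rw [hq, map_mul, killCompl_inr_X_inl, zero_mul]

end Antiderivative

section Translation

variable {σ τ R : Type*} [CommSemiring R]

/-- The translate `V(x + t b)` of a polynomial `V` in the variables `x_G` in direction `b`,
where the time `t` is a polynomial in the enlarged ring `R[(x_j)_{j∈τ}, (x_G)_{G∈σ}]`. -/
noncomputable def translateAlong (b : σ → R) (t : MvPolynomial (τ ⊕ σ) R) :
    MvPolynomial σ R →ₐ[R] MvPolynomial (τ ⊕ σ) R :=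
  aeval fun G => X (Sum.inr G) + b G • t

theorem killCompl_inr_translateAlong (b : σ → R) {t : MvPolynomial (τ ⊕ σ) R}
    (ht : killCompl Sum.inr_injective t = 0) (V : MvPolynomial σ R) :
    killCompl Sum.inr_injective (translateAlong b t V) = V := by
  suffices h : (killCompl Sum.inr_injective).comp (translateAlong b t) = AlgHom.id R _ from
    DFunLike.congr_fun h V
  ext G
  simp [translateAlong, ht]

theorem pderiv_inl_translateAlong (b : σ → R) (t : MvPolynomial (τ ⊕ σ) R) (i : τ)
    (V : MvPolynomial σ R) :
    pderiv (Sum.inl i) (translateAlong b t V) =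
      pderiv (Sum.inl i) t * translateAlong b t (dirDeriv b V) := by
  refine derivation_algHom_eq_mul _ _ _ _ (fun G => ?_) V
  simp [translateAlong, smul_eq_C_mul, pderiv_X_of_ne, mul_comm]

theorem dirDeriv_translateAlong (b : σ → R) {t : MvPolynomial (τ ⊕ σ) R}
    (ht : dirDeriv (Sum.elim 0 b) t = 0) (V : MvPolynomial σ R) :
    dirDeriv (Sum.elim 0 b) (translateAlong b t V) = translateAlong b t (dirDeriv b V) := by
  simpa using derivation_algHom_eq_mul (translateAlong b t) (dirDeriv b) (dirDeriv (Sum.elim 0 b)) 1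
    (fun G => by simp [translateAlong, ht]) V

end Translation

section Solution

variable {S R : Type*} [CommRing R] [Algebra ℚ R]

/-- The solution `∫_{-x_e}^{x_i} V(x + t b) dt` of the boundary value problem, split at `t = 0`
with `t` replaced by `-t` on the negative side. -/
noncomputable def flowIntegral (b : S → R) (V : MvPolynomial S R) : MvPolynomial (Fin 2 ⊕ S) R :=
  antideriv (Sum.inl 0) (translateAlong b (X (Sum.inl 0)) V) +
    antideriv (Sum.inl 1) (translateAlong b (-X (Sum.inl 1)) V)

variable (b : S → R) (V : MvPolynomial S R)

theorem killCompl_inr_flowIntegral : killCompl Sum.inr_injective (flowIntegral b V) = 0 := by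
  simp only [flowIntegral, map_add, killCompl_inr_antideriv_inl, add_zero]

theorem pderiv_inl_zero_flowIntegral :
    pderiv (Sum.inl 0) (flowIntegral b V) = translateAlong b (X (Sum.inl 0)) V := by
  simp [flowIntegral, pderiv_antideriv, pderiv_antideriv_of_ne, pderiv_inl_translateAlong,
    pderiv_X_of_ne]

theorem pderiv_inl_one_flowIntegral :
    pderiv (Sum.inl 1) (flowIntegral b V) = translateAlong b (-X (Sum.inl 1)) V := by
  simp [flowIntegral, pderiv_antideriv, pderiv_antideriv_of_ne, pderiv_inl_translateAlong,
    pderiv_X_of_ne]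

theorem pderiv_inl_zero_pderiv_inl_one_flowIntegral :
    pderiv (Sum.inl 0) (pderiv (Sum.inl 1) (flowIntegral b V)) = 0 := by
  simp [pderiv_inl_one_flowIntegral, pderiv_inl_translateAlong, pderiv_X_of_ne]

theorem pderiv_inl_zero_sub_pderiv_inl_one_flowIntegral :
    pderiv (Sum.inl 0) (flowIntegral b V) - pderiv (Sum.inl 1) (flowIntegral b V) =
      dirDeriv (Sum.elim 0 b) (flowIntegral b V) := by
  have : IsAddTorsionFree R := .of_module_rat R
  refine sub_eq_zero.1 (eq_zero_of_pderiv_inl_eq_zero (fun i => ?_) ?_)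
  · fin_cases i <;>
      simp [pderiv_dirDeriv, pderiv_inl_zero_flowIntegral, pderiv_inl_one_flowIntegral,
        pderiv_inl_translateAlong, dirDeriv_translateAlong, pderiv_X_of_ne]
  · simp [killCompl_inr_dirDeriv, killCompl_inr_flowIntegral, pderiv_inl_zero_flowIntegral,
      pderiv_inl_one_flowIntegral, killCompl_inr_translateAlong]

end Solution

theorem stmt8_general {S R : Type*} [CommRing R] [Algebra ℚ R] (b : S → R)
    (V : MvPolynomial S R) :
    ∃! W : MvPolynomial (Fin 2 ⊕ S) R,
      pderiv (Sum.inl 0) (pderiv (Sum.inl 1) W) = 0 ∧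
      pderiv (Sum.inl 0) W - pderiv (Sum.inl 1) W = dirDeriv (Sum.elim 0 b) W ∧
      killCompl Sum.inr_injective W = 0 ∧
      killCompl Sum.inr_injective (pderiv (Sum.inl 0) W) = V ∧
      killCompl Sum.inr_injective (pderiv (Sum.inl 1) W) = V := by
  have : IsAddTorsionFree R := .of_module_rat R
  refine ⟨flowIntegral b V, ⟨pderiv_inl_zero_pderiv_inl_one_flowIntegral b V,
    pderiv_inl_zero_sub_pderiv_inl_one_flowIntegral b V, killCompl_inr_flowIntegral b V,
    ?_, ?_⟩, ?_⟩
  · rw [pderiv_inl_zero_flowIntegral, killCompl_inr_translateAlong b (killCompl_inr_X_inl 0)]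
  · rw [pderiv_inl_one_flowIntegral, killCompl_inr_translateAlong b (by simp)]
  · rintro W ⟨hmixed, htransport, hW, hW₀, -⟩
    refine sub_eq_zero.1 (eq_zero_of_transport b ?_ ?_ ?_ ?_)
    · simp [hmixed, pderiv_inl_zero_pderiv_inl_one_flowIntegral]
    · simp only [map_sub, ← htransport, ← pderiv_inl_zero_sub_pderiv_inl_one_flowIntegral]
      abel
    · rw [map_sub, hW, killCompl_inr_flowIntegral, sub_zero]
    · rw [map_sub, map_sub, hW₀, pderiv_inl_zero_flowIntegral,
        killCompl_inr_translateAlong b (killCompl_inr_X_inl 0), sub_self]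

theorem sub00_eq_rename_killCompl {S : Type*} (P : MvPolynomial (Fin 2 ⊕ S) ℝ) :
    sub00 S P = rename Sum.inr (killCompl Sum.inr_injective P) := by
  refine DFunLike.congr_fun (algHom_ext (f := aeval _)
    (g := (rename Sum.inr).comp (killCompl Sum.inr_injective)) ?_) P
  rintro (i | G) <;> simp

/-- there is a unique polynomial `W` in `ℝ[x_i, x_e, (x_G)_{G∈S}]`
(with `x_i = X (Sum.inl 0)`, `x_e = X (Sum.inl 1)`) satisfying
(i) `∂_i ∂_e W = 0`, (ii) `(∂_i − ∂_e − Σ_G b_G ∂_G) W = 0`,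
(iii) `W|_{x_i=0,x_e=0} = 0`, (iv) `(∂_i W)|_{x_i=0,x_e=0} = V`, and
(v) `(∂_e W)|_{x_i=0,x_e=0} = V`. -/
theorem stmt8 (S : Type*) [Fintype S] [DecidableEq S] (b : S → ℝ) (V : MvPolynomial S ℝ) :
    ∃! W : MvPolynomial (Fin 2 ⊕ S) ℝ,
      pderiv (Sum.inl 0 : Fin 2 ⊕ S) (pderiv (Sum.inl 1 : Fin 2 ⊕ S) W) = 0 ∧
      pderiv (Sum.inl 0 : Fin 2 ⊕ S) W - pderiv (Sum.inl 1 : Fin 2 ⊕ S) W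
          - ∑ G : S, b G • pderiv (Sum.inr G) W = 0 ∧
      sub00 S W = 0 ∧
      sub00 S (pderiv (Sum.inl 0 : Fin 2 ⊕ S) W) = rename (Sum.inr : S → Fin 2 ⊕ S) V ∧
      sub00 S (pderiv (Sum.inl 1 : Fin 2 ⊕ S) W) = rename (Sum.inr : S → Fin 2 ⊕ S) V := by
  have hinj := rename_injective (R := ℝ) (Sum.inr : S → Fin 2 ⊕ S) Sum.inr_injective
  simpa only [sub00_eq_rename_killCompl, hinj.eq_iff, map_eq_zero_iff _ hinj, sub_eq_zero,
    dirDeriv_sumElim_zero_apply] using stmt8_general b V
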